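/- arXiv:1902.08393 — 2 statements merged into one kernel-verified Lean document; each statement's English description precedes it below -/
import Mathlib

section
/- Let ϑ, ϑ₁, ϑ₂ be Beurling weights on ℝ^d and 1 ≤ p, q, r < ∞. Then A^{p,1,q,r}_{ϑ₁,ϑ}(ℝ^d) = A^{p,1,q,r}_{ϑ₂,ϑ}(ℝ^d) (equality of sets) if and only if the weights ϑ₁ and ϑ₂ are equivalent, i.e. ϑ₁ ≺ ϑ₂ and ϑ₂ ≺ ϑ₁. -/
open MeasureTheory Filter Topology
open scoped ENNReal NNReal BigOperators

noncomputable section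

/-- The unit cube `α + [0,1)^d` at the integer point `α ∈ ℤ^d`. -/
def cube {d : ℕ} (α : Fin d → ℤ) : Set (Fin d → ℝ) :=
  Set.univ.pi fun i => Set.Ico (α i : ℝ) ((α i : ℝ) + 1)

/-- The weighted amalgam norm `‖f‖_{pq,ω}` of the space `(L^p_ω, ℓ^q)`. -/
def amalgamNorm {d : ℕ} (p q : ℝ) (ω : (Fin d → ℝ) → ℝ) (f : (Fin d → ℝ) → ℂ) : ℝ≥0∞ :=
  (∑' α : Fin d → ℤ,
      (eLpNorm (fun x => ω x • f x) (ENNReal.ofReal p) (volume.restrict (cube α))) ^ q) ^ (1 / q)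

/-- Membership in the weighted amalgam space `(L^p_ω, ℓ^q)`. -/
def MemAmalgam {d : ℕ} (p q : ℝ) (ω : (Fin d → ℝ) → ℝ) (f : (Fin d → ℝ) → ℂ) : Prop :=
  Measurable f ∧ amalgamNorm p q ω f < ⊤

/-- A Beurling weight: measurable, `ϑ ≥ 1` and submultiplicative. -/
def IsBeurling {d : ℕ} (ϑ : (Fin d → ℝ) → ℝ) : Prop :=
  Measurable ϑ ∧ (∀ x, 1 ≤ ϑ x) ∧ ∀ x y, ϑ (x + y) ≤ ϑ x * ϑ y

/-- The Fourier transform `f̂(ξ) = ∫ f(x) e^{-2πi⟨x,ξ⟩} dx`. -/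
def fourierT {d : ℕ} (f : (Fin d → ℝ) → ℂ) (ξ : Fin d → ℝ) : ℂ :=
  ∫ x : Fin d → ℝ,
    Complex.exp (-(2 * (Real.pi : ℂ) * Complex.I * ∑ i, (x i : ℂ) * (ξ i : ℂ))) * f x

/-- The norm of `A^{p,1,q,r}_{ϑ₁,ϑ₂}(ℝ^d)`. -/
def ANorm {d : ℕ} (p q r : ℝ) (ϑ₁ ϑ₂ : (Fin d → ℝ) → ℝ) (f : (Fin d → ℝ) → ℂ) : ℝ≥0∞ :=
  amalgamNorm p 1 ϑ₁ f + amalgamNorm q r ϑ₂ (fourierT f)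

/-- Membership in `A^{p,1,q,r}_{ϑ₁,ϑ₂}(ℝ^d)`. -/
def MemA {d : ℕ} (p q r : ℝ) (ϑ₁ ϑ₂ : (Fin d → ℝ) → ℝ) (f : (Fin d → ℝ) → ℂ) : Prop :=
  MemAmalgam p 1 ϑ₁ f ∧ MemAmalgam q r ϑ₂ (fourierT f)

/-- Convolution `(f∗g)(x) = ∫ f(x−t)g(t) dt`. -/
def convF {d : ℕ} (f g : (Fin d → ℝ) → ℂ) (x : Fin d → ℝ) : ℂ :=
  ∫ t : Fin d → ℝ, f (x - t) * g t

/-- `ϑ ≺ ϑ'` : domination of weights up to a constant. -/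
def Prec {d : ℕ} (ϑ ϑ' : (Fin d → ℝ) → ℝ) : Prop :=
  ∃ C : ℝ, 0 < C ∧ ∀ x, ϑ x ≤ C * ϑ' x

/-- The Beurling–Domar condition `∑_{n≥1} log ϑ(nx)/n² < ∞`. -/
def BeurlingDomar {d : ℕ} (ϑ : (Fin d → ℝ) → ℝ) : Prop :=
  ∀ x : Fin d → ℝ, Summable fun n : ℕ => Real.log (ϑ ((n : ℝ) • x)) / (n : ℝ) ^ 2

/-- `w` does not tend to zero as `|x| → ∞`. -/
def NotVanishingAtInfty {d : ℕ} (w : (Fin d → ℝ) → ℝ) : Prop :=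
  ∃ δ : ℝ, 0 < δ ∧ ∀ R : ℝ, 0 < R → ∃ x : Fin d → ℝ, R < ‖x‖ ∧ δ ≤ w x

end

lemma beurling_nsmul {d : ℕ} {ϑ : (Fin d → ℝ) → ℝ} (h : IsBeurling ϑ) (y : Fin d → ℝ) (n : ℕ) :
    ϑ (((n + 1 : ℕ) : ℝ) • y) ≤ ϑ y ^ (n + 1) := by
  induction n with
  | zero => simp
  | succ k ih =>
    have e : (((k + 1 + 1 : ℕ) : ℝ) • y) = ((k + 1 : ℕ) : ℝ) • y + y := by
      push_cast; module
    rw [e, pow_succ]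
    refine (h.2.2 _ _).trans ?_
    have := h.2.1 y
    gcongr

lemma beurling_ball {d : ℕ} {ϑ : (Fin d → ℝ) → ℝ} (h : IsBeurling ϑ) :
    ∃ M ε : ℝ, 1 ≤ M ∧ 0 < ε ∧ ∀ x, ‖x‖ < ε → ϑ x ≤ M := by
  let E : ℕ → Set (Fin d → ℝ) := fun n => {x | ϑ x ≤ n} ∩ {x | ϑ (-x) ≤ n}
  have hE : ∀ n, MeasurableSet (E n) := fun n =>
    (measurableSet_le h.1 measurable_const).inter
      (measurableSet_le (h.1.comp measurable_neg) measurable_const)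
  have hU : ⋃ n, E n = Set.univ := by
    refine Set.eq_univ_of_forall fun x => Set.mem_iUnion.2 ?_
    obtain ⟨n, hn⟩ := exists_nat_ge (max (ϑ x) (ϑ (-x)))
    exact ⟨n, (le_max_left _ _).trans hn, (le_max_right _ _).trans hn⟩
  obtain ⟨n, hn⟩ := MeasureTheory.exists_pos_measure_of_cover (μ := (volume : Measure (Fin d → ℝ))) hU
    (NeZero.ne _)
  have := MeasureTheory.Measure.sub_mem_nhds_zero_of_addHaar_pos volume (E n) (hE n) hn
  obtain ⟨ε, hε, hb⟩ := Metric.mem_nhds_iff.1 this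
  refine ⟨max 1 ((n : ℝ) * n), ε, le_max_left _ _, hε, fun x hx => ?_⟩
  obtain ⟨a, ha, b, hb', rfl⟩ := Set.mem_sub.1 (hb (by simpa using hx))
  refine le_trans ?_ (le_max_right _ _)
  rw [sub_eq_add_neg]
  refine (h.2.2 _ _).trans ?_
  have h1 := h.2.1 a
  have h2 := h.2.1 (-b)
  exact mul_le_mul ha.1 hb'.2 (by linarith) (by positivity)

lemma beurling_growth {d : ℕ} {ϑ : (Fin d → ℝ) → ℝ} (h : IsBeurling ϑ) :
    ∃ A B : ℝ, 0 < A ∧ 0 ≤ B ∧ ∀ x, ϑ x ≤ A * Real.exp (B * ‖x‖) := by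
  obtain ⟨M, ε, hM, hε, hb⟩ := beurling_ball h
  refine ⟨M, Real.log M / ε, by linarith, div_nonneg (Real.log_nonneg hM) hε.le, fun x => ?_⟩
  set k := ⌊‖x‖ / ε⌋₊ with hk
  have hk1 : ‖x‖ / ε < k + 1 := Nat.lt_floor_add_one _
  have hk2 : (k : ℝ) ≤ ‖x‖ / ε := Nat.floor_le (by positivity)
  set y : Fin d → ℝ := (((k + 1 : ℕ) : ℝ))⁻¹ • x with hy
  have hpos : (0 : ℝ) < ((k + 1 : ℕ) : ℝ) := by positivity
  have hyn : ‖y‖ < ε := by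
    rw [hy, norm_smul, norm_inv, Real.norm_of_nonneg hpos.le, inv_mul_lt_iff₀ hpos]
    rw [div_lt_iff₀ hε] at hk1
    push_cast; exact hk1
  have hxy : x = (((k + 1 : ℕ) : ℝ)) • y := by
    rw [hy, smul_smul, mul_inv_cancel₀ hpos.ne', one_smul]
  have h1 : ϑ x ≤ M ^ (k + 1) := by
    rw [hxy]
    refine (beurling_nsmul h y k).trans ?_
    have := h.2.1 y
    exact pow_le_pow_left₀ (by linarith) (hb y hyn) _
  refine h1.trans ?_
  rw [pow_succ, mul_comm]
  have hM0 : 0 < M := by linarith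
  gcongr
  rw [← Real.rpow_natCast, Real.rpow_def_of_pos hM0]
  apply Real.exp_le_exp.2
  have := Real.log_nonneg hM
  calc Real.log M * k ≤ Real.log M * (‖x‖ / ε) := by gcongr
    _ = _ := by ring

lemma tsum_pi_prod (d : ℕ) (g : Fin d → ℤ → ℝ≥0∞) :
    ∑' α : Fin d → ℤ, ∏ i, g i (α i) = ∏ i, ∑' k, g i k := by
  induction d with
  | zero => simp
  | succ n ih =>
    rw [← (Fin.consEquiv (fun _ : Fin (n + 1) => ℤ)).tsum_eq, ENNReal.tsum_prod', Fin.prod_univ_succ]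
    simp only [Fin.consEquiv, Equiv.coe_fn_mk, Fin.prod_univ_succ, Fin.cons_zero, Fin.cons_succ]
    simp only [ENNReal.tsum_mul_left, ENNReal.tsum_mul_right]
    rw [ih]

lemma tsum_int_exp : ∑' k : ℤ, ENNReal.ofReal (Real.exp (-|(k : ℝ)|)) < ⊤ := by
  have hs : Summable fun n : ℕ => Real.exp (-(n : ℝ)) := Real.summable_exp_neg_nat
  have h : Summable fun k : ℤ => Real.exp (-|(k : ℝ)|) := by
    apply Summable.of_nat_of_neg
    · simpa using hs
    · simpa using hs
  exact h.tsum_ofReal_lt_top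

lemma tsum_int_shift (t : ℝ) : ∑' k : ℤ, ENNReal.ofReal (Real.exp (-|(k : ℝ) - t|)) ≤
    ENNReal.ofReal (Real.exp 1) * ∑' k : ℤ, ENNReal.ofReal (Real.exp (-|(k : ℝ)|)) := by
  rw [← (Equiv.addRight ⌊t⌋).tsum_eq, ← ENNReal.tsum_mul_left]
  refine ENNReal.tsum_le_tsum fun k => ?_
  rw [← ENNReal.ofReal_mul (Real.exp_pos _).le, ← Real.exp_add]
  apply ENNReal.ofReal_le_ofReal
  apply Real.exp_le_exp.2
  have h1 := Int.floor_le t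
  have h2 := Int.lt_floor_add_one t
  simp only [Equiv.coe_addRight]
  push_cast
  have : |(k : ℝ)| ≤ |(k : ℝ) + ⌊t⌋ - t| + |t - ⌊t⌋| := by
    have := abs_add_le ((k : ℝ) + ⌊t⌋ - t) (t - ⌊t⌋)
    rwa [show (k : ℝ) + ⌊t⌋ - t + (t - ⌊t⌋) = k by ring] at this
  have h3 : |t - ⌊t⌋| ≤ 1 := by rw [abs_le]; constructor <;> linarith
  linarith

/-- The `ℓ¹` norm. -/
noncomputable def ellOne {d : ℕ} (y : Fin d → ℝ) : ℝ := ∑ i, |y i|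

lemma tsum_pi_bound (d : ℕ) : ∃ S : ℝ≥0∞, S < ⊤ ∧ ∀ t : Fin d → ℝ,
    ∑' α : Fin d → ℤ, ENNReal.ofReal (Real.exp (-ellOne (fun i => (α i : ℝ) - t i))) ≤ S := by
  refine ⟨∏ i : Fin d, (ENNReal.ofReal (Real.exp 1) * ∑' k : ℤ, ENNReal.ofReal (Real.exp (-|(k : ℝ)|))),
    ENNReal.prod_lt_top fun i _ => ENNReal.mul_lt_top ENNReal.ofReal_lt_top tsum_int_exp, fun t => ?_⟩
  have : ∀ α : Fin d → ℤ, ENNReal.ofReal (Real.exp (-ellOne (fun i => (α i : ℝ) - t i))) =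
      ∏ i, ENNReal.ofReal (Real.exp (-|(α i : ℝ) - t i|)) := fun α => by
    rw [ellOne, ← Finset.sum_neg_distrib, Real.exp_sum,
      ENNReal.ofReal_prod_of_nonneg fun i _ => (Real.exp_pos _).le]
  simp_rw [this]
  rw [tsum_pi_prod d (fun i k => ENNReal.ofReal (Real.exp (-|(k : ℝ) - t i|)))]
  exact Finset.prod_le_prod' fun i _ => tsum_int_shift (t i)

lemma volume_cube {d : ℕ} (α : Fin d → ℤ) : volume (cube α) = 1 := by
  rw [cube, Real.volume_pi_Ico]; simp

lemma measurableSet_cube {d : ℕ} (α : Fin d → ℤ) : MeasurableSet (cube α) :=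
  MeasurableSet.univ_pi fun _ => measurableSet_Ico

/-- On a cube the weight `exp(-|x - t|₁)` is comparable to its value at the corner. -/
lemma exp_cube {d : ℕ} (α : Fin d → ℤ) (t x : Fin d → ℝ) (hx : x ∈ cube α) :
    Real.exp (-ellOne (fun i => x i - t i)) ≤
      Real.exp d * Real.exp (-ellOne (fun i => (α i : ℝ) - t i)) := by
  rw [← Real.exp_add]
  apply Real.exp_le_exp.2
  have : ellOne (fun i => (α i : ℝ) - t i) ≤ ellOne (fun i => x i - t i) + d := by
    have hd : (d : ℝ) = ∑ i : Fin d, (1 : ℝ) := by simp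
    rw [ellOne, ellOne, hd, ← Finset.sum_add_distrib]
    refine Finset.sum_le_sum fun i _ => ?_
    have hi := hx i (Set.mem_univ i)
    have h1 := abs_add_le (x i - t i) ((α i : ℝ) - x i)
    have h2 : |(α i : ℝ) - x i| ≤ 1 := by
      rw [abs_le]; constructor <;> linarith [hi.1, hi.2]
    have h3 : x i - t i + ((α i : ℝ) - x i) = (α i : ℝ) - t i := by ring
    rw [h3] at h1
    linarith
  linarith

lemma eLpNorm_cube_le {d : ℕ} (p : ℝ≥0∞) (α : Fin d → ℤ) (h : (Fin d → ℝ) → ℂ) (C : ℝ)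
    (hC : ∀ x ∈ cube α, ‖h x‖ ≤ C) :
    eLpNorm h p (volume.restrict (cube α)) ≤ ENNReal.ofReal C := by
  have := eLpNorm_le_of_ae_bound (p := p) ((ae_restrict_iff' (μ := volume) (measurableSet_cube α)).2
    (Eventually.of_forall hC))
  simpa [volume_cube] using this

lemma le_eLpNorm_cube {d : ℕ} (p : ℝ≥0∞) (hp : p ≠ 0) (hp' : p ≠ ⊤) (α : Fin d → ℤ)
    (h : (Fin d → ℝ) → ℂ) (C : ℝ)
    (hC0 : 0 ≤ C) (hC : ∀ x ∈ cube α, C ≤ ‖h x‖) :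
    ENNReal.ofReal C ≤ eLpNorm h p (volume.restrict (cube α)) := by
  have h1 : eLpNorm (fun _ : Fin d → ℝ => C) p (volume.restrict (cube α)) = ENNReal.ofReal C := by
    rw [eLpNorm_const' _ hp hp']
    simp [volume_cube, Real.enorm_eq_ofReal hC0]
  rw [← h1]
  refine eLpNorm_mono_ae ((ae_restrict_iff' (measurableSet_cube α)).2 (Eventually.of_forall ?_))
  intro x hx
  rw [Real.norm_of_nonneg hC0]
  exact hC x hx

lemma ellOne_nonneg {d : ℕ} (y : Fin d → ℝ) : 0 ≤ ellOne y :=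
  Finset.sum_nonneg fun _ _ => abs_nonneg _

lemma norm_le_ellOne {d : ℕ} (y : Fin d → ℝ) : ‖y‖ ≤ ellOne y := by
  refine (pi_norm_le_iff_of_nonneg (ellOne_nonneg y)).2 fun i => ?_
  exact Finset.single_le_sum (f := fun i => |y i|) (fun _ _ => abs_nonneg _) (Finset.mem_univ i)

/-- The standard Gaussian. -/
noncomputable def gau {d : ℕ} (y : Fin d → ℝ) : ℝ := Real.exp (-Real.pi * ∑ i, y i ^ 2)

lemma gau_pos {d : ℕ} (y : Fin d → ℝ) : 0 < gau y := Real.exp_pos _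

lemma gau_le_one {d : ℕ} (y : Fin d → ℝ) : gau y ≤ 1 := by
  apply Real.exp_le_one_iff.2
  have : 0 ≤ ∑ i, y i ^ 2 := Finset.sum_nonneg fun _ _ => sq_nonneg _
  nlinarith [Real.pi_pos]

lemma continuous_gau {d : ℕ} : Continuous (gau : (Fin d → ℝ) → ℝ) := by
  unfold gau; fun_prop

lemma weight_gau {d : ℕ} {ϑ : (Fin d → ℝ) → ℝ} (h : IsBeurling ϑ) :
    ∃ K : ℝ, 0 < K ∧ ∀ y, ϑ y * gau y ≤ K * Real.exp (-ellOne y) := by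
  obtain ⟨A, B, hA, hB, hAB⟩ := beurling_growth h
  refine ⟨A * Real.exp (∑ i : Fin d, (B + 1) ^ 2), by positivity, fun y => ?_⟩
  calc ϑ y * gau y ≤ A * Real.exp (B * ellOne y) * gau y := by
        have := gau_pos y
        gcongr
        refine (hAB y).trans ?_
        have := norm_le_ellOne y
        gcongr
    _ = A * Real.exp (B * ellOne y + -Real.pi * ∑ i, y i ^ 2) := by
        rw [gau, mul_assoc, Real.exp_add]
    _ ≤ A * Real.exp (∑ i : Fin d, (B + 1) ^ 2 + -ellOne y) := by
        refine mul_le_mul_of_nonneg_left (Real.exp_le_exp.2 ?_) hA.le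
        have : (B + 1) * ellOne y ≤ ∑ i : Fin d, (B + 1) ^ 2 + Real.pi * ∑ i, y i ^ 2 := by
          rw [ellOne, Finset.mul_sum, Finset.mul_sum, ← Finset.sum_add_distrib]
          refine Finset.sum_le_sum fun i _ => ?_
          have h1 : |y i| ^ 2 = y i ^ 2 := sq_abs _
          have h2 := Real.pi_gt_three
          nlinarith [sq_nonneg (|y i| - (B + 1)), sq_nonneg (y i), sq_nonneg (B + 1)]
        linarith
    _ = _ := by rw [Real.exp_add, mul_assoc]

lemma integrable_gau {d : ℕ} : Integrable (gau : (Fin d → ℝ) → ℝ) := by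
  have := (GaussianFourier.integrable_cexp_neg_mul_sum_add (ι := Fin d) (b := (Real.pi : ℂ))
    (by simpa using Real.pi_pos) 0).re
  refine this.congr (Eventually.of_forall fun y => ?_)
  simp only [gau, Pi.zero_apply, zero_mul, Finset.sum_const_zero, add_zero]
  have : (-(Real.pi : ℂ) * ∑ i, (y i : ℂ) ^ 2) = ((-Real.pi * ∑ i, y i ^ 2 : ℝ) : ℂ) := by
    push_cast; rfl
  rw [this, ← Complex.ofReal_exp]
  rfl

/-- The character. -/
noncomputable def chr {d : ℕ} (ξ x : Fin d → ℝ) : ℂ :=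
  Complex.exp (-(2 * (Real.pi : ℂ) * Complex.I * ∑ i, (x i : ℂ) * (ξ i : ℂ)))

lemma norm_chr {d : ℕ} (ξ x : Fin d → ℝ) : ‖chr ξ x‖ = 1 := by
  have : -(2 * (Real.pi : ℂ) * Complex.I * ∑ i, (x i : ℂ) * (ξ i : ℂ)) =
      ((-(2 * Real.pi * ∑ i, x i * ξ i) : ℝ) : ℂ) * Complex.I := by
    push_cast; ring
  rw [chr, this, Complex.norm_exp_ofReal_mul_I]

lemma chr_add {d : ℕ} (ξ x y : Fin d → ℝ) : chr ξ (x + y) = chr ξ x * chr ξ y := by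
  rw [chr, chr, chr, ← Complex.exp_add]
  congr 1
  simp only [Pi.add_apply, Complex.ofReal_add, add_mul, Finset.sum_add_distrib]
  ring

lemma continuous_chr {d : ℕ} : Continuous fun z : (Fin d → ℝ) × (Fin d → ℝ) => chr z.1 z.2 := by
  unfold chr; fun_prop

lemma integral_chr_gau {d : ℕ} (ξ : Fin d → ℝ) :
    ∫ x : Fin d → ℝ, chr ξ x * (gau x : ℂ) = (gau ξ : ℂ) := by
  have := GaussianFourier.integral_cexp_neg_mul_sum_add (ι := Fin d) (b := (Real.pi : ℂ))
    (by simpa using Real.pi_pos) (fun i => -(2 * (Real.pi : ℂ) * Complex.I) * (ξ i : ℂ))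
  have hpi : (Real.pi : ℂ) ≠ 0 := by exact_mod_cast Real.pi_ne_zero
  rw [div_self hpi, Complex.one_cpow, one_mul] at this
  have e1 : ∀ x : Fin d → ℝ, chr ξ x * (gau x : ℂ) = Complex.exp (-(Real.pi : ℂ) * ∑ i, (x i : ℂ) ^ 2
      + ∑ i, -(2 * (Real.pi : ℂ) * Complex.I) * (ξ i : ℂ) * x i) := fun x => by
    rw [chr, gau, Complex.ofReal_exp, ← Complex.exp_add]
    congr 1
    push_cast
    rw [add_comm]
    congr 1
    rw [← neg_mul, Finset.mul_sum]
    exact Finset.sum_congr rfl fun i _ => by ring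
  simp_rw [e1]
  rw [this, gau, Complex.ofReal_exp]
  congr 1
  push_cast
  rw [div_eq_iff (by simpa using hpi), Finset.mul_sum, Finset.sum_mul]
  refine Finset.sum_congr rfl fun i _ => ?_
  have := Complex.I_sq
  linear_combination (4 * (Real.pi : ℂ) ^ 2 * (ξ i : ℂ) ^ 2) * this

lemma norm_integral_chr_gau {d : ℕ} (ξ X : Fin d → ℝ) :
    ‖∫ x : Fin d → ℝ, chr ξ x * (gau (x - X) : ℂ)‖ = gau ξ := by
  rw [← integral_add_right_eq_self (μ := volume) _ X]
  simp only [chr_add, add_sub_cancel_right]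
  have : ∀ x : Fin d → ℝ, chr ξ x * chr ξ X * (gau x : ℂ) = chr ξ X * (chr ξ x * (gau x : ℂ)) :=
    fun x => by ring
  simp_rw [this]
  rw [integral_const_mul, integral_chr_gau, norm_mul, norm_chr, one_mul, Complex.norm_real,
    Real.norm_of_nonneg (gau_pos _).le]

/-- The sum of translated Gaussians. -/
noncomputable def hump {d : ℕ} (c : ℕ → ℝ) (X : ℕ → Fin d → ℝ) (x : Fin d → ℝ) : ℝ :=
  ∑' n, c n * gau (x - X n)

section hump
variable {d : ℕ} {c : ℕ → ℝ} {X : ℕ → Fin d → ℝ}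

lemma hump_term_le (hc0 : ∀ n, 0 ≤ c n) (x : Fin d → ℝ) (n : ℕ) :
    ‖c n * gau (x - X n)‖ ≤ c n := by
  rw [Real.norm_of_nonneg (mul_nonneg (hc0 n) (gau_pos _).le)]
  exact mul_le_of_le_one_right (hc0 n) (gau_le_one _)

lemma hump_nonneg (hc0 : ∀ n, 0 ≤ c n) (x : Fin d → ℝ) : 0 ≤ hump c X x :=
  tsum_nonneg fun n => mul_nonneg (hc0 n) (gau_pos _).le

lemma hump_summable (hc0 : ∀ n, 0 ≤ c n) (hc : Summable c) (x : Fin d → ℝ) :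
    Summable fun n => c n * gau (x - X n) :=
  Summable.of_norm_bounded hc (hump_term_le hc0 x)

lemma continuous_hump (hc0 : ∀ n, 0 ≤ c n) (hc : Summable c) : Continuous (hump c X) :=
  continuous_tsum (fun n => continuous_const.mul (continuous_gau.comp (by fun_prop))) hc
    fun n x => hump_term_le hc0 x n

lemma fourierT_hump_le (hc0 : ∀ n, 0 ≤ c n) (hc : Summable c) (ξ : Fin d → ℝ) :
    ‖fourierT (fun x => (hump c X x : ℂ)) ξ‖ ≤ (∑' n, c n) * gau ξ := by
  have hnorm : ∀ n (x : Fin d → ℝ), ‖chr ξ x * ((c n * gau (x - X n) : ℝ) : ℂ)‖ =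
      c n * gau (x - X n) := fun n x => by
    rw [norm_mul, norm_chr, one_mul, Complex.norm_real,
      Real.norm_of_nonneg (mul_nonneg (hc0 n) (gau_pos _).le)]
  have hint : ∀ n, Integrable (fun x : Fin d → ℝ => chr ξ x * ((c n * gau (x - X n) : ℝ) : ℂ)) := by
    intro n
    have h1 : Integrable fun x : Fin d → ℝ => c n * gau (x - X n) :=
      (integrable_gau.comp_sub_right (X n)).const_mul (c n)
    refine h1.mono' ?_ (Eventually.of_forall fun x => (hnorm n x).le)
    apply Continuous.aestronglyMeasurable
    have h2 : Continuous fun x : Fin d → ℝ => gau (x - X n) :=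
      continuous_gau.comp (continuous_id.sub continuous_const)
    have h3 : Continuous fun x : Fin d → ℝ => chr ξ x := by unfold chr; fun_prop
    exact h3.mul (Complex.continuous_ofReal.comp (continuous_const.mul h2))
  have e : fourierT (fun x => (hump c X x : ℂ)) ξ =
      ∑' n, ∫ x : Fin d → ℝ, chr ξ x * ((c n * gau (x - X n) : ℝ) : ℂ) := by
    rw [integral_tsum_of_summable_integral_norm hint]
    · unfold fourierT
      congr 1
      ext x
      rw [tsum_mul_left, ← Complex.ofReal_tsum]
      rfl
    · simp_rw [hnorm, integral_const_mul, integral_sub_right_eq_self (μ := volume) gau]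
      exact hc.mul_right _
  have hn : ∀ n, ‖∫ x : Fin d → ℝ, chr ξ x * ((c n * gau (x - X n) : ℝ) : ℂ)‖ = c n * gau ξ := by
    intro n
    have : ∀ x : Fin d → ℝ, chr ξ x * ((c n * gau (x - X n) : ℝ) : ℂ) =
      (c n : ℂ) * (chr ξ x * (gau (x - X n) : ℂ)) := fun x => by push_cast; ring
    simp_rw [this]
    rw [integral_const_mul, norm_mul, norm_integral_chr_gau, Complex.norm_real,
      Real.norm_of_nonneg (hc0 n)]
  rw [e, ← tsum_mul_right]
  refine (norm_tsum_le_tsum_norm ?_).trans ?_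
  · simp_rw [hn]; exact hc.mul_right _
  · simp_rw [hn]; exact le_rfl

lemma measurable_fourierT (f : (Fin d → ℝ) → ℂ) (hf : Measurable f) : Measurable (fourierT f) := by
  have : StronglyMeasurable fun z : (Fin d → ℝ) × (Fin d → ℝ) => chr z.1 z.2 * f z.2 :=
    (continuous_chr.measurable.mul (hf.comp measurable_snd)).stronglyMeasurable
  exact this.integral_prod_right'.measurable

lemma memAmalgam_fourier {q r : ℝ} (hr : 1 ≤ r) {ϑ : (Fin d → ℝ) → ℝ} (hϑ : IsBeurling ϑ)
    (hc0 : ∀ n, 0 ≤ c n) (hc : Summable c) :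
    MemAmalgam q r ϑ (fourierT (fun x => (hump c X x : ℂ))) := by
  refine ⟨measurable_fourierT _ (Complex.measurable_ofReal.comp (continuous_hump hc0 hc).measurable), ?_⟩
  obtain ⟨K, hK, hKb⟩ := weight_gau hϑ
  obtain ⟨S, hS, hSb⟩ := tsum_pi_bound d
  have hr0 : 0 ≤ r := by linarith
  have hT : 0 ≤ ∑' n, c n := tsum_nonneg hc0
  refine ENNReal.rpow_lt_top_of_nonneg (by positivity) (ne_of_lt ?_)
  have hterm : ∀ α : Fin d → ℤ, (eLpNorm (fun x => ϑ x • fourierT (fun x => (hump c X x : ℂ)) x)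
      (ENNReal.ofReal q) (volume.restrict (cube α))) ^ r ≤
      ENNReal.ofReal ((∑' n, c n) * K * Real.exp d) ^ r *
        ENNReal.ofReal (Real.exp (-ellOne (fun i => (α i : ℝ) - (0 : Fin d → ℝ) i))) := by
    intro α
    have h1 : eLpNorm (fun x => ϑ x • fourierT (fun x => (hump c X x : ℂ)) x)
      (ENNReal.ofReal q) (volume.restrict (cube α)) ≤ ENNReal.ofReal ((∑' n, c n) * K * Real.exp d *
        Real.exp (-ellOne (fun i => (α i : ℝ) - (0 : Fin d → ℝ) i))) := by
      refine eLpNorm_cube_le _ _ _ _ fun x hx => ?_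
      have h0 := hϑ.2.1 x
      rw [norm_smul, Real.norm_of_nonneg (by linarith)]
      calc ϑ x * ‖fourierT (fun x => (hump c X x : ℂ)) x‖ ≤ ϑ x * ((∑' n, c n) * gau x) := by
            gcongr; exact fourierT_hump_le hc0 hc x
        _ = (∑' n, c n) * (ϑ x * gau x) := by ring
        _ ≤ (∑' n, c n) * (K * (Real.exp d *
            Real.exp (-ellOne (fun i => (α i : ℝ) - (0 : Fin d → ℝ) i)))) := by
            refine mul_le_mul_of_nonneg_left ((hKb x).trans ?_) hT
            gcongr
            have := exp_cube α 0 x hx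
            simpa using this
        _ = _ := by ring
    refine (ENNReal.rpow_le_rpow h1 hr0).trans ?_
    rw [ENNReal.ofReal_mul (by positivity), ENNReal.mul_rpow_of_nonneg _ _ hr0]
    gcongr
    refine ENNReal.rpow_le_self_of_le_one ?_ hr
    rw [ENNReal.ofReal_le_one]
    exact Real.exp_le_one_iff.2 (neg_nonpos.2 (ellOne_nonneg _))
  refine (ENNReal.tsum_le_tsum hterm).trans_lt ?_
  rw [ENNReal.tsum_mul_left]
  exact ENNReal.mul_lt_top (ENNReal.rpow_lt_top_of_nonneg hr0 ENNReal.ofReal_ne_top)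
    ((hSb 0).trans_lt hS)

lemma memAmalgam_hump {p : ℝ} {ϑ : (Fin d → ℝ) → ℝ} (hϑ : IsBeurling ϑ)
    (hc0 : ∀ n, 0 ≤ c n) (hc : Summable c) (hcϑ : Summable fun n => c n * ϑ (X n)) :
    MemAmalgam p 1 ϑ (fun x => (hump c X x : ℂ)) := by
  refine ⟨Complex.measurable_ofReal.comp (continuous_hump hc0 hc).measurable, ?_⟩
  obtain ⟨K, hK, hKb⟩ := weight_gau hϑ
  obtain ⟨S, hS, hSb⟩ := tsum_pi_bound d
  have hpos : ∀ x, 0 ≤ ϑ x := fun x => by linarith [hϑ.2.1 x]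
  refine ENNReal.rpow_lt_top_of_nonneg (by positivity) (ne_of_lt ?_)
  simp only [ENNReal.rpow_one]
  have hterm : ∀ α : Fin d → ℤ, eLpNorm (fun x => ϑ x • (hump c X x : ℂ))
      (ENNReal.ofReal p) (volume.restrict (cube α)) ≤
      ∑' n, ENNReal.ofReal (c n * ϑ (X n)) * (ENNReal.ofReal (K * Real.exp d) *
        ENNReal.ofReal (Real.exp (-ellOne (fun i => (α i : ℝ) - X n i)))) := by
    intro α
    have hs2 : Summable fun n => c n * ϑ (X n) * (K * Real.exp d *
        Real.exp (-ellOne (fun i => (α i : ℝ) - X n i))) := by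
      refine Summable.of_nonneg_of_le (fun n => ?_) (fun n => ?_) (hcϑ.mul_right (K * Real.exp d))
      · have := hc0 n; have := hpos (X n); positivity
      · have := hc0 n; have := hpos (X n)
        refine mul_le_mul_of_nonneg_left ?_ (by positivity)
        refine mul_le_of_le_one_right (by positivity) ?_
        exact Real.exp_le_one_iff.2 (neg_nonpos.2 (ellOne_nonneg _))
    have h1 : eLpNorm (fun x => ϑ x • (hump c X x : ℂ))
      (ENNReal.ofReal p) (volume.restrict (cube α)) ≤ ENNReal.ofReal (∑' n, c n * ϑ (X n) *
        (K * Real.exp d * Real.exp (-ellOne (fun i => (α i : ℝ) - X n i)))) := by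
      refine eLpNorm_cube_le _ _ _ _ fun x hx => ?_
      rw [norm_smul, Real.norm_of_nonneg (hpos x), Complex.norm_real,
        Real.norm_of_nonneg (hump_nonneg hc0 x), hump,
        ← tsum_mul_left]
      refine Summable.tsum_le_tsum (fun n => ?_) ((hump_summable hc0 hc x).mul_left _) hs2
      have h3 : ϑ x ≤ ϑ (X n) * ϑ (x - X n) := by
        have := hϑ.2.2 (X n) (x - X n)
        rwa [add_sub_cancel] at this
      have h4 := hc0 n
      have h5 := gau_pos (x - X n)
      have h6 := hpos (X n)
      calc ϑ x * (c n * gau (x - X n)) ≤ (ϑ (X n) * ϑ (x - X n)) * (c n * gau (x - X n)) := by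
            gcongr
        _ = c n * ϑ (X n) * (ϑ (x - X n) * gau (x - X n)) := by ring
        _ ≤ c n * ϑ (X n) * (K * (Real.exp d *
              Real.exp (-ellOne (fun i => (α i : ℝ) - X n i)))) := by
            refine mul_le_mul_of_nonneg_left ((hKb _).trans ?_) (by positivity)
            gcongr
            exact exp_cube α (X n) x hx
        _ = _ := by ring
    refine h1.trans ?_
    rw [ENNReal.ofReal_tsum_of_nonneg _ hs2]
    · refine ENNReal.tsum_le_tsum fun n => ?_
      rw [ENNReal.ofReal_mul (p := c n * ϑ (X n)) (mul_nonneg (hc0 n) (hpos _)),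
        ENNReal.ofReal_mul (p := K * Real.exp d) (by positivity)]
    · intro n
      have := hc0 n; have := hpos (X n); positivity
  refine (ENNReal.tsum_le_tsum hterm).trans_lt ?_
  rw [ENNReal.tsum_comm]
  simp only [ENNReal.tsum_mul_left]
  have : ∀ n, ENNReal.ofReal (c n * ϑ (X n)) * (ENNReal.ofReal (K * Real.exp d) *
      ∑' α : Fin d → ℤ, ENNReal.ofReal (Real.exp (-ellOne (fun i => (α i : ℝ) - X n i)))) ≤
      ENNReal.ofReal (c n * ϑ (X n)) * (ENNReal.ofReal (K * Real.exp d) * S) := fun n => by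
    gcongr
    exact hSb (X n)
  refine (ENNReal.tsum_le_tsum this).trans_lt ?_
  rw [ENNReal.tsum_mul_right]
  exact ENNReal.mul_lt_top hcϑ.tsum_ofReal_lt_top (ENNReal.mul_lt_top ENNReal.ofReal_lt_top hS)

lemma hump_lower {p : ℝ} (hp : 1 ≤ p) {ϑ : (Fin d → ℝ) → ℝ} (hϑ : IsBeurling ϑ)
    (hc0 : ∀ n, 0 ≤ c n) (hc : Summable c) :
    ∃ κ : ℝ, 0 < κ ∧ ∀ n, ENNReal.ofReal (κ * (c n * ϑ (X n))) ≤
      amalgamNorm p 1 ϑ (fun x => (hump c X x : ℂ)) := by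
  obtain ⟨A, B, hA, hB, hAB⟩ := beurling_growth hϑ
  have hpos : ∀ x, 0 < ϑ x := fun x => by linarith [hϑ.2.1 x]
  refine ⟨(A * Real.exp B)⁻¹ * Real.exp (-Real.pi * d), by positivity, fun n => ?_⟩
  have hp0 : ENNReal.ofReal p ≠ 0 := by
    rw [Ne, ENNReal.ofReal_eq_zero]; linarith
  simp only [amalgamNorm, ENNReal.rpow_one, div_one]
  refine le_trans ?_ (ENNReal.le_tsum (fun i => ⌊X n i⌋))
  refine le_eLpNorm_cube _ hp0 ENNReal.ofReal_ne_top _ _ _ ?_ fun x hx => ?_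
  · have := hc0 n; have := hpos (X n); positivity
  have hd : ∀ i, |x i - X n i| ≤ 1 := fun i => by
    have hi := hx i (Set.mem_univ i)
    have h1 := Int.floor_le (X n i)
    have h2 := Int.lt_floor_add_one (X n i)
    rw [abs_le]; constructor <;> linarith [hi.1, hi.2]
  rw [norm_smul, Real.norm_of_nonneg (hpos x).le, Complex.norm_real,
        Real.norm_of_nonneg (hump_nonneg hc0 x)]
  have h1 : c n * gau (x - X n) ≤ hump c X x :=
    (hump_summable hc0 hc x).le_tsum n fun m _ => mul_nonneg (hc0 m) (gau_pos _).le
  have h2 : Real.exp (-Real.pi * d) ≤ gau (x - X n) := by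
    apply Real.exp_le_exp.2
    have : ∑ i, (x - X n) i ^ 2 ≤ ∑ i : Fin d, (1 : ℝ) :=
      Finset.sum_le_sum fun i _ => by
        have := hd i
        rw [Pi.sub_apply, ← sq_abs]
        nlinarith [abs_nonneg (x i - X n i)]
    simp only [Finset.sum_const, Finset.card_univ, Fintype.card_fin, nsmul_eq_mul, mul_one] at this
    nlinarith [Real.pi_pos]
  have h3 : ϑ (X n) ≤ (A * Real.exp B) * ϑ x := by
    have h4 := hϑ.2.2 x (X n - x)
    rw [add_sub_cancel] at h4
    have h5 : ‖X n - x‖ ≤ 1 := by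
      refine (pi_norm_le_iff_of_nonneg zero_le_one).2 fun i => ?_
      rw [Pi.sub_apply, Real.norm_eq_abs, abs_sub_comm]; exact hd i
    have h6 : ϑ (X n - x) ≤ A * Real.exp B := by
      refine (hAB _).trans ?_
      gcongr
      exact mul_le_of_le_one_right hB h5
    calc ϑ (X n) ≤ ϑ x * ϑ (X n - x) := h4
      _ ≤ ϑ x * (A * Real.exp B) := by gcongr; exact (hpos x).le
      _ = _ := by ring
  have h3' : (A * Real.exp B)⁻¹ * ϑ (X n) ≤ ϑ x := by
    rw [inv_mul_le_iff₀ (by positivity)]; exact h3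
  have h4 := hc0 n
  have h5 := (hpos x).le
  calc (A * Real.exp B)⁻¹ * Real.exp (-Real.pi * d) * (c n * ϑ (X n))
      = ((A * Real.exp B)⁻¹ * ϑ (X n)) * (c n * Real.exp (-Real.pi * d)) := by ring
    _ ≤ ϑ x * (c n * gau (x - X n)) := by gcongr
    _ ≤ ϑ x * hump c X x := by gcongr

end hump

lemma prec_of_subset {d : ℕ} {p q r : ℝ} (hp : 1 ≤ p) (hr : 1 ≤ r)
    {ϑ ϑ₁ ϑ₂ : (Fin d → ℝ) → ℝ}
    (hϑ : IsBeurling ϑ) (h1 : IsBeurling ϑ₁) (h2 : IsBeurling ϑ₂)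
    (H : ∀ f : (Fin d → ℝ) → ℂ, MemA p q r ϑ₁ ϑ f → MemA p q r ϑ₂ ϑ f) : Prec ϑ₂ ϑ₁ := by
  by_contra hn
  have hn' : ∀ n : ℕ, ∃ x, (4 : ℝ) ^ n * ϑ₁ x < ϑ₂ x := by
    intro n
    by_contra! h
    exact hn ⟨4 ^ n, by positivity, h⟩
  choose X hX using hn'
  have hpos : ∀ x, 0 < ϑ₁ x := fun x => by linarith [h1.2.1 x]
  set c : ℕ → ℝ := fun n => (1 / 2 : ℝ) ^ n / ϑ₁ (X n) with hcdef
  have hc0 : ∀ n, 0 ≤ c n := fun n => div_nonneg (by positivity) (hpos _).le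
  have hc : Summable c := Summable.of_nonneg_of_le hc0
    (fun n => div_le_self (by positivity) (h1.2.1 _)) summable_geometric_two
  have hcϑ : Summable fun n => c n * ϑ₁ (X n) := by
    have : ∀ n, c n * ϑ₁ (X n) = (1 / 2 : ℝ) ^ n := fun n => div_mul_cancel₀ _ (hpos _).ne'
    simp_rw [this]; exact summable_geometric_two
  have hmem := H _ ⟨memAmalgam_hump (p := p) h1 hc0 hc hcϑ, memAmalgam_fourier (q := q) hr hϑ hc0 hc⟩
  obtain ⟨κ, hκ, hlow⟩ := hump_lower (X := X) hp h2 hc0 hc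
  have hfin := hmem.1.2
  set N := amalgamNorm p 1 ϑ₂ (fun x => (hump c X x : ℂ)) with hN
  obtain ⟨n, hn⟩ := pow_unbounded_of_one_lt (N.toReal / κ) (one_lt_two)
  have h3 : (2 : ℝ) ^ n ≤ c n * ϑ₂ (X n) := by
    have e : (2 : ℝ) ^ n = c n * (4 ^ n * ϑ₁ (X n)) := by
      have : c n * (4 ^ n * ϑ₁ (X n)) = (c n * ϑ₁ (X n)) * 4 ^ n := by ring
      rw [this, hcdef]
      simp only
      rw [div_mul_cancel₀ _ (hpos _).ne', ← mul_pow]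
      norm_num
    rw [e]
    exact mul_le_mul_of_nonneg_left (hX n).le (hc0 n)
  have h4 := (ENNReal.ofReal_le_iff_le_toReal hfin.ne).1 (hlow n)
  rw [div_lt_iff₀ hκ] at hn
  nlinarith

lemma memA_of_prec {d : ℕ} {p q r : ℝ} {ϑ ϑ₁ ϑ₂ : (Fin d → ℝ) → ℝ}
    (h1 : IsBeurling ϑ₁) (h2 : IsBeurling ϑ₂) (H : Prec ϑ₂ ϑ₁)
    (f : (Fin d → ℝ) → ℂ) (hf : MemA p q r ϑ₁ ϑ f) : MemA p q r ϑ₂ ϑ f := by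
  refine ⟨⟨hf.1.1, ?_⟩, hf.2⟩
  obtain ⟨C, hC, hCb⟩ := H
  have h := hf.1.2
  simp only [amalgamNorm, ENNReal.rpow_one, div_one] at h ⊢
  refine lt_of_le_of_lt ?_ (ENNReal.mul_lt_top (ENNReal.ofReal_lt_top (r := C)) h)
  rw [← ENNReal.tsum_mul_left]
  refine ENNReal.tsum_le_tsum fun α => ?_
  refine eLpNorm_le_mul_eLpNorm_of_ae_le_mul (Eventually.of_forall fun x => ?_) _
  have e1 := h1.2.1 x
  have e2 := h2.2.1 x
  rw [norm_smul, norm_smul, Real.norm_of_nonneg (by linarith), Real.norm_of_nonneg (by linarith),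
    ← mul_assoc]
  gcongr
  exact hCb x

/-- `A^{p,1,q,r}_{ϑ₁,ϑ}(ℝ^d) = A^{p,1,q,r}_{ϑ₂,ϑ}(ℝ^d)` as sets
if and only if the weights `ϑ₁` and `ϑ₂` are equivalent. -/
theorem A_equality_iff {d : ℕ} (p q r : ℝ) (hp : 1 ≤ p) (hq : 1 ≤ q) (hr : 1 ≤ r)
    (ϑ ϑ₁ ϑ₂ : (Fin d → ℝ) → ℝ)
    (hϑ : IsBeurling ϑ) (h1 : IsBeurling ϑ₁) (h2 : IsBeurling ϑ₂) :
    (∀ f : (Fin d → ℝ) → ℂ, MemA p q r ϑ₁ ϑ f ↔ MemA p q r ϑ₂ ϑ f) ↔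
    (Prec ϑ₁ ϑ₂ ∧ Prec ϑ₂ ϑ₁) := by
  constructor
  · intro H
    exact ⟨prec_of_subset hp hr hϑ h2 h1 fun f => (H f).2,
      prec_of_subset hp hr hϑ h1 h2 fun f => (H f).1⟩
  · rintro ⟨H1, H2⟩ f
    exact ⟨memA_of_prec h1 h2 H2 f, memA_of_prec h2 h1 H1 f⟩
end

section
/- Let ϑ₁, ϑ₂, ϑ₃ be Beurling weights on ℝ^d and 1 < p, q, r < ∞. Assume ϑ₁ ≺ ϑ₂, ϑ₃ ≺ ϑ₂ and that ϑ₃(x)/ϑ₂(x) does not tend to zero as |x| → ∞. Then the inclusion map from A^{p,1,q,r}_{ϑ₁,ϑ₂}(ℝ^d) into (L^p_{ϑ₃}, ℓ¹) is never a compact operator: there exists a sequence bounded in ‖·‖_A with no subsequence converging in the norm ‖·‖_{p1,ϑ₃}. -/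
open MeasureTheory Filter Topology
open scoped ENNReal NNReal BigOperators

lemma beurling_local {d : ℕ} {ϑ : (Fin d → ℝ) → ℝ} (h : IsBeurling ϑ) :
    ∃ K ε : ℝ, 1 ≤ K ∧ 0 < ε ∧ ∀ x, ‖x‖ < ε → ϑ x ≤ K := by
  obtain ⟨hm, h1, hs⟩ := h
  let E : ℕ → Set (Fin d → ℝ) := fun n => {x | ϑ x ≤ n ∧ ϑ (-x) ≤ n}
  have hE : ∀ n, MeasurableSet (E n) := fun n =>
    (measurableSet_le hm measurable_const).inter
      (measurableSet_le (hm.comp measurable_neg) measurable_const)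
  have hU : (⋃ n, E n) = Set.univ := by
    ext x
    simp only [Set.mem_iUnion, Set.mem_univ, iff_true]
    obtain ⟨n, hn⟩ := exists_nat_ge (max (ϑ x) (ϑ (-x)))
    exact ⟨n, (le_max_left _ _).trans hn, (le_max_right _ _).trans hn⟩
  obtain ⟨n, hn⟩ : ∃ n, 0 < volume (E n) := by
    by_contra! hc
    have : volume (⋃ n, E n) = 0 := measure_iUnion_null fun n => le_antisymm (hc n) bot_le
    rw [hU] at this
    exact (isOpen_univ.measure_ne_zero volume Set.univ_nonempty) this
  have hst := MeasureTheory.Measure.sub_mem_nhds_zero_of_addHaar_pos volume (E n) (hE n) hn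
  obtain ⟨ε, hε, hb⟩ := Metric.mem_nhds_iff.1 hst
  have key : ∀ x, ‖x‖ < ε → ϑ x ≤ (n : ℝ) * n := by
    intro x hx
    obtain ⟨a, ha, b, hb', rfl⟩ := Set.mem_sub.1 (hb (by simpa using hx))
    rw [sub_eq_add_neg]
    refine (hs _ _).trans ?_
    exact mul_le_mul ha.1 hb'.2 (by linarith [h1 (-b)]) (by positivity)
  exact ⟨(n : ℝ) * n, ε, (h1 0).trans (key 0 (by simpa using hε)), hε, key⟩

lemma beurling_pow {d : ℕ} {ϑ : (Fin d → ℝ) → ℝ} (h : IsBeurling ϑ) (x : Fin d → ℝ) (n : ℕ) :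
    ϑ (((n : ℝ) + 1) • x) ≤ ϑ x ^ (n + 1) := by
  obtain ⟨hm, h1, hs⟩ := h
  induction n with
  | zero => simp
  | succ n ih =>
    rw [add_smul, one_smul, pow_succ]
    push_cast
    refine (hs _ _).trans ?_
    exact mul_le_mul_of_nonneg_right ih (by linarith [h1 x])

lemma beurling_exp {d : ℕ} {ϑ : (Fin d → ℝ) → ℝ} (h : IsBeurling ϑ) :
    ∃ C a : ℝ, 0 < C ∧ 0 ≤ a ∧ ∀ x, ϑ x ≤ C * Real.exp (a * ‖x‖) := by
  obtain ⟨K, ε, hK, hε, hb⟩ := beurling_local h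
  have hK0 : 0 < K := by linarith
  refine ⟨K, Real.log K / ε, hK0, div_nonneg (Real.log_nonneg hK) hε.le, fun x => ?_⟩
  set n := ⌊‖x‖ / ε⌋₊
  have hn : ‖x‖ / ε < n + 1 := Nat.lt_floor_add_one _
  have hn' : (n : ℝ) ≤ ‖x‖ / ε := Nat.floor_le (by positivity)
  have hpos : (0 : ℝ) < (n : ℝ) + 1 := by positivity
  have e : x = ((n : ℝ) + 1) • (((n : ℝ) + 1)⁻¹ • x) := by
    rw [smul_smul, mul_inv_cancel₀ hpos.ne', one_smul]
  have hy : ϑ (((n : ℝ) + 1)⁻¹ • x) ≤ K := by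
    apply hb
    rw [norm_smul, Real.norm_eq_abs, abs_of_pos (by positivity), inv_mul_lt_iff₀ hpos]
    rwa [div_lt_iff₀ hε] at hn
  calc ϑ x ≤ ϑ (((n : ℝ) + 1)⁻¹ • x) ^ (n + 1) := by
        conv_lhs => rw [e]
        exact beurling_pow h _ n
    _ ≤ K ^ (n + 1) := pow_le_pow_left₀ (by linarith [h.2.1 (((n : ℝ) + 1)⁻¹ • x)]) hy _
    _ = K * Real.exp (n * Real.log K) := by
        rw [Real.exp_nat_mul, Real.exp_log hK0, pow_succ, mul_comm]
    _ ≤ K * Real.exp (Real.log K / ε * ‖x‖) := by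
        refine mul_le_mul_of_nonneg_left (Real.exp_le_exp.2 ?_) hK0.le
        calc (n : ℝ) * Real.log K ≤ ‖x‖ / ε * Real.log K :=
              mul_le_mul_of_nonneg_right hn' (Real.log_nonneg hK)
          _ = Real.log K / ε * ‖x‖ := by ring

lemma norm_sq_le_sum {d : ℕ} (y : Fin d → ℝ) : ‖y‖ ^ 2 ≤ ∑ i, y i ^ 2 := by
  have h0 : 0 ≤ ∑ i, y i ^ 2 := Finset.sum_nonneg fun i _ => sq_nonneg _
  have : ‖y‖ ≤ Real.sqrt (∑ i, y i ^ 2) := by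
    rw [pi_norm_le_iff_of_nonneg (Real.sqrt_nonneg _)]
    intro i
    rw [Real.norm_eq_abs]
    apply Real.le_sqrt_of_sq_le
    rw [sq_abs]
    exact Finset.single_le_sum (f := fun i => y i ^ 2) (fun i _ => sq_nonneg _) (Finset.mem_univ i)
  calc ‖y‖ ^ 2 ≤ Real.sqrt (∑ i, y i ^ 2) ^ 2 := by gcongr
    _ = _ := Real.sq_sqrt h0

/-- A weight times a Gaussian decays exponentially. -/
lemma weight_gauss {d : ℕ} {ϑ : (Fin d → ℝ) → ℝ} (h : IsBeurling ϑ) :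
    ∃ K : ℝ, 0 < K ∧ ∀ y, ϑ y * Real.exp (-Real.pi * ∑ i, y i ^ 2) ≤ K * Real.exp (-‖y‖) := by
  obtain ⟨C, a, hC, ha, hb⟩ := beurling_exp h
  refine ⟨C * Real.exp ((a + 1) ^ 2 / 4), by positivity, fun y => ?_⟩
  have h1 : -Real.pi * ∑ i, y i ^ 2 ≤ -‖y‖ ^ 2 := by
    have := norm_sq_le_sum y
    have := Real.pi_gt_three
    nlinarith [sq_nonneg ‖y‖]
  calc ϑ y * Real.exp (-Real.pi * ∑ i, y i ^ 2)
      ≤ C * Real.exp (a * ‖y‖) * Real.exp (-‖y‖ ^ 2) := by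
        apply mul_le_mul (hb y) (Real.exp_le_exp.2 h1) (by positivity) (by positivity)
    _ = C * Real.exp (a * ‖y‖ + -‖y‖ ^ 2) := by rw [mul_assoc, ← Real.exp_add]
    _ ≤ C * Real.exp ((a + 1) ^ 2 / 4 + -‖y‖) := by
        refine mul_le_mul_of_nonneg_left (Real.exp_le_exp.2 ?_) hC.le
        nlinarith [sq_nonneg (‖y‖ - (a + 1) / 2)]
    _ = _ := by rw [Real.exp_add, mul_assoc]

lemma cube_floor {d : ℕ} {α : Fin d → ℤ} {x : Fin d → ℝ} (h : x ∈ cube α) (i : Fin d) :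
    ⌊x i⌋ = α i := by
  have := h i (Set.mem_univ i)
  exact Int.floor_eq_iff.2 ⟨this.1, this.2⟩

lemma cube_disjoint {d : ℕ} : Pairwise (Function.onFun Disjoint (cube (d := d))) := by
  intro α β hab
  refine Set.disjoint_left.2 fun x hx hy => hab ?_
  ext i
  rw [← cube_floor hx, ← cube_floor hy]

lemma cube_union {d : ℕ} : (⋃ α, cube (d := d) α) = Set.univ := by
  ext x
  simp only [Set.mem_iUnion, Set.mem_univ, iff_true]
  exact ⟨fun i => ⌊x i⌋, fun i _ => ⟨Int.floor_le _, Int.lt_floor_add_one _⟩⟩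

lemma cube_lintegral {d : ℕ} (F : (Fin d → ℝ) → ℝ≥0∞) :
    ∑' α, ∫⁻ x in cube α, F x = ∫⁻ x, F x := by
  rw [← lintegral_iUnion measurableSet_cube cube_disjoint, cube_union, Measure.restrict_univ]

lemma cube_dist {d : ℕ} {α : Fin d → ℤ} {x y : Fin d → ℝ} (hx : x ∈ cube α) (hy : y ∈ cube α) :
    ‖x - y‖ ≤ 1 := by
  rw [pi_norm_le_iff_of_nonneg zero_le_one]
  intro i
  have h1 := hx i (Set.mem_univ i)
  have h2 := hy i (Set.mem_univ i)
  simp only [Set.mem_Ico] at h1 h2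
  rw [Pi.sub_apply, Real.norm_eq_abs, abs_le]
  constructor <;> linarith

lemma lintegral_exp_norm {d : ℕ} :
    ∫⁻ x : Fin d → ℝ, ENNReal.ofReal (Real.exp (-‖x‖)) < ⊤ := by
  have h := finite_integral_one_add_norm (μ := (volume : Measure (Fin d → ℝ)))
    (r := ((d + 1 : ℕ) : ℝ)) (by simp)
  have : ∀ x : Fin d → ℝ, ENNReal.ofReal (Real.exp (-‖x‖)) ≤
      ENNReal.ofReal (Real.exp 1 * (d + 1).factorial) *
        ENNReal.ofReal ((1 + ‖x‖) ^ (-((d + 1 : ℕ) : ℝ))) := by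
    intro x
    rw [← ENNReal.ofReal_mul (by positivity)]
    apply ENNReal.ofReal_le_ofReal
    have hx : 0 < 1 + ‖x‖ := by positivity
    rw [Real.rpow_neg hx.le, Real.rpow_natCast, ← div_eq_mul_inv, le_div_iff₀ (by positivity)]
    have := Real.pow_div_factorial_le_exp (1 + ‖x‖) hx.le (d + 1)
    rw [div_le_iff₀ (by positivity), Real.exp_add] at this
    rw [Real.exp_neg, inv_mul_le_iff₀ (by positivity)]
    linarith
  refine (lintegral_mono this).trans_lt ?_
  rw [lintegral_const_mul' _ _ (by simp)]
  exact ENNReal.mul_lt_top (by simp) h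

lemma amalgam_bound {d : ℕ} (p s : ℝ) (hs : 1 ≤ s) (K : ℝ) (hK : 0 < K) :
    ∃ B : ℝ≥0∞, B < ⊤ ∧ ∀ (ω : (Fin d → ℝ) → ℝ) (f : (Fin d → ℝ) → ℂ) (c : Fin d → ℝ),
      (∀ x, ‖ω x • f x‖ ≤ K * Real.exp (-‖x - c‖)) → amalgamNorm p s ω f ≤ B := by
  set L := (K * Real.exp 1) ^ s with hL
  have hL0 : 0 ≤ L := by positivity
  refine ⟨(ENNReal.ofReal L * ∫⁻ x : Fin d → ℝ, ENNReal.ofReal (Real.exp (-‖x‖))) ^ (1 / s),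
    ENNReal.rpow_lt_top_of_nonneg (by positivity)
      (ENNReal.mul_lt_top (by simp) lintegral_exp_norm).ne, ?_⟩
  intro ω f c hb
  unfold amalgamNorm
  gcongr
  have key : ∀ α : Fin d → ℤ,
      (eLpNorm (fun x => ω x • f x) (ENNReal.ofReal p) (volume.restrict (cube α))) ^ s ≤
      ∫⁻ y in cube α, ENNReal.ofReal L * ENNReal.ofReal (Real.exp (-‖y - c‖)) := by
    intro α
    have h1 : ∀ y ∈ cube α,
        (eLpNorm (fun x => ω x • f x) (ENNReal.ofReal p) (volume.restrict (cube α))) ^ s ≤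
        ENNReal.ofReal L * ENNReal.ofReal (Real.exp (-‖y - c‖)) := by
      intro y hy
      have h2 : ∀ᵐ x ∂(volume.restrict (cube α)),
          ‖ω x • f x‖ ≤ K * Real.exp 1 * Real.exp (-‖y - c‖) := by
        filter_upwards [ae_restrict_mem (measurableSet_cube α)] with x hx
        refine (hb x).trans ?_
        rw [mul_assoc, ← Real.exp_add]
        gcongr
        have := cube_dist hx hy
        have h3 : ‖y - c‖ ≤ ‖x - c‖ + ‖x - y‖ := by
          rw [norm_sub_rev x y, add_comm]
          exact norm_sub_le_norm_sub_add_norm_sub y x c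
        linarith
      have h3 := eLpNorm_le_of_ae_bound (p := ENNReal.ofReal p) h2
      rw [Measure.restrict_apply_univ, volume_cube, ENNReal.one_rpow, one_mul] at h3
      calc _ ≤ (ENNReal.ofReal (K * Real.exp 1 * Real.exp (-‖y - c‖))) ^ s := by gcongr
        _ = ENNReal.ofReal (L * (Real.exp (-‖y - c‖)) ^ s) := by
          rw [ENNReal.ofReal_rpow_of_nonneg (by positivity) (by positivity),
            Real.mul_rpow (by positivity) (by positivity)]
        _ ≤ ENNReal.ofReal (L * Real.exp (-‖y - c‖)) := by
          gcongr
          rw [← Real.exp_mul]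
          gcongr
          nlinarith [norm_nonneg (y - c)]
        _ = _ := ENNReal.ofReal_mul hL0
    calc _ = ∫⁻ y in cube α, (eLpNorm (fun x => ω x • f x) (ENNReal.ofReal p)
              (volume.restrict (cube α))) ^ s := by
            rw [lintegral_const, Measure.restrict_apply_univ, volume_cube, mul_one]
      _ ≤ _ := setLIntegral_mono' (measurableSet_cube α) h1
  refine (ENNReal.tsum_le_tsum key).trans ?_
  rw [cube_lintegral, lintegral_const_mul' _ _ (by simp),
    lintegral_sub_right_eq_self (fun y => ENNReal.ofReal (Real.exp (-‖y‖))) c]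

lemma lintegral_le_amalgam {d : ℕ} (p : ℝ) (hp : 1 < p) {ω : (Fin d → ℝ) → ℝ}
    {f : (Fin d → ℝ) → ℂ} (hω : Measurable ω) (hf : Measurable f) :
    ∫⁻ x, ‖ω x • f x‖ₑ ≤ amalgamNorm p 1 ω f := by
  unfold amalgamNorm
  rw [← cube_lintegral]
  simp only [ENNReal.rpow_one, div_one]
  refine ENNReal.tsum_le_tsum fun α => ?_
  have : IsProbabilityMeasure (volume.restrict (cube α)) :=
    ⟨by rw [Measure.restrict_apply_univ, volume_cube]⟩
  rw [← eLpNorm_one_eq_lintegral_enorm]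
  apply eLpNorm_le_eLpNorm_of_exponent_le
  · rw [← ENNReal.ofReal_one]; exact ENNReal.ofReal_le_ofReal hp.le
  · exact (hω.smul hf).aestronglyMeasurable

/-- The translated, normalized Gaussian. -/
noncomputable def gaussT {d : ℕ} (k : ℝ) (a : Fin d → ℝ) (x : Fin d → ℝ) : ℂ :=
  ((k * Real.exp (-Real.pi * ∑ i, (x - a) i ^ 2) : ℝ) : ℂ)

lemma gaussT_meas {d : ℕ} (k : ℝ) (a : Fin d → ℝ) : Measurable (gaussT k a) := by
  unfold gaussT
  apply Complex.measurable_ofReal.comp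
  simp only [Pi.sub_apply]
  fun_prop

lemma fourier_gaussT {d : ℕ} (k : ℝ) (a : Fin d → ℝ) :
    fourierT (gaussT k a) = fun ξ : Fin d → ℝ =>
      ((k * Real.exp (-Real.pi * ∑ i, ξ i ^ 2) : ℝ) : ℂ) *
        Complex.exp (((-(2 * Real.pi * ∑ i, a i * ξ i) : ℝ) : ℂ) * Complex.I) := by
  funext ξ
  unfold fourierT gaussT
  have hpi : (Real.pi : ℂ) ≠ 0 := by exact_mod_cast Real.pi_ne_zero
  have h := GaussianFourier.integral_cexp_neg_sum_mul_add (ι := Fin d) (b := fun _ => (Real.pi : ℂ))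
    (fun i => by simpa using Real.pi_pos)
    (fun i => 2 * Real.pi * (a i : ℂ) - 2 * Real.pi * Complex.I * (ξ i : ℂ))
  have e : ∀ x : Fin d → ℝ,
      Complex.exp (-(2 * (Real.pi : ℂ) * Complex.I * ∑ i, (x i : ℂ) * (ξ i : ℂ))) *
        ((k * Real.exp (-Real.pi * ∑ i, (x - a) i ^ 2) : ℝ) : ℂ) =
      ((k : ℂ) * Complex.exp (-Real.pi * ∑ i, (a i : ℂ) ^ 2)) *
      Complex.exp (-∑ i, (Real.pi : ℂ) * (x i : ℂ) ^ 2 +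
        ∑ i, (2 * Real.pi * (a i : ℂ) - 2 * Real.pi * Complex.I * (ξ i : ℂ)) * (x i : ℂ)) := by
    intro x
    push_cast
    rw [mul_assoc (k : ℂ), ← Complex.exp_add, mul_left_comm, ← Complex.exp_add]
    congr 2
    simp only [Finset.mul_sum, ← Finset.sum_neg_distrib, ← Finset.sum_add_distrib]
    refine Finset.sum_congr rfl fun i _ => ?_
    push_cast [Pi.sub_apply]
    ring
  simp_rw [e]
  rw [integral_const_mul, h]
  simp only [div_self hpi, Complex.one_cpow, one_mul]
  rw [← Complex.exp_sum]
  push_cast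
  rw [mul_assoc (k : ℂ), mul_assoc (k : ℂ), ← Complex.exp_add, ← Complex.exp_add]
  congr 2
  simp only [Finset.mul_sum, ← Finset.sum_neg_distrib, ← Finset.sum_add_distrib, Finset.sum_mul]
  refine Finset.sum_congr rfl fun i _ => ?_
  field_simp
  ring_nf
  simp only [Complex.I_sq]
  ring

/-- if `ϑ₁ ≺ ϑ₂`, `ϑ₃ ≺ ϑ₂` and `ϑ₃/ϑ₂` does not tend to zero at
infinity, then the inclusion of `A^{p,1,q,r}_{ϑ₁,ϑ₂}(ℝ^d)` into `(L^p_{ϑ₃}, ℓ¹)`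
is never compact. -/
theorem A_embedding_never_compact' {d : ℕ} (p q r : ℝ) (hp : 1 < p) (hq : 1 < q) (hr : 1 < r)
    (ϑ₁ ϑ₂ ϑ₃ : (Fin d → ℝ) → ℝ)
    (h1 : IsBeurling ϑ₁) (h2 : IsBeurling ϑ₂) (h3 : IsBeurling ϑ₃)
    (h12 : Prec ϑ₁ ϑ₂) (h32 : Prec ϑ₃ ϑ₂)
    (hnv : NotVanishingAtInfty (fun x => ϑ₃ x / ϑ₂ x)) :
    ∃ f : ℕ → (Fin d → ℝ) → ℂ,
      (∀ n, MemA p q r ϑ₁ ϑ₂ (f n)) ∧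
      (∃ M : ℝ, ∀ n, ANorm p q r ϑ₁ ϑ₂ (f n) ≤ ENNReal.ofReal M) ∧
      ¬ ∃ (φ : ℕ → ℕ) (g : (Fin d → ℝ) → ℂ), StrictMono φ ∧ MemAmalgam p 1 ϑ₃ g ∧
          Tendsto (fun k => amalgamNorm p 1 ϑ₃ (fun x => f (φ k) x - g x)) atTop (nhds 0) := by
  obtain ⟨δ, hδ, hx⟩ := hnv
  have hx' : ∀ n : ℕ, ∃ x : Fin d → ℝ, (n : ℝ) + 1 < ‖x‖ ∧ δ ≤ ϑ₃ x / ϑ₂ x :=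
    fun n => hx _ (by positivity)
  choose a ha hda using hx'
  obtain ⟨C, hC, h12⟩ := h12
  have p1 : ∀ x, 0 < ϑ₁ x := fun x => by linarith [h1.2.1 x]
  have p2 : ∀ x, 0 < ϑ₂ x := fun x => by linarith [h2.2.1 x]
  have p3 : ∀ x, 0 < ϑ₃ x := fun x => by linarith [h3.2.1 x]
  have hnorm : ∀ n (x : Fin d → ℝ), ‖gaussT (ϑ₂ (a n))⁻¹ (a n) x‖ =
      (ϑ₂ (a n))⁻¹ * Real.exp (-Real.pi * ∑ i, (x - a n) i ^ 2) := by
    intro n x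
    unfold gaussT
    rw [Complex.norm_real, Real.norm_eq_abs, abs_of_nonneg]
    have := p2 (a n)
    positivity
  -- first norm
  obtain ⟨K₁, hK₁, hw1⟩ := weight_gauss h1
  obtain ⟨B₁, hB₁, hb1⟩ := amalgam_bound (d := d) p 1 le_rfl (C * K₁) (by positivity)
  have bd1 : ∀ n, amalgamNorm p 1 ϑ₁ (gaussT (ϑ₂ (a n))⁻¹ (a n)) ≤ B₁ := by
    intro n
    refine hb1 _ _ (a n) fun x => ?_
    rw [norm_smul, hnorm, Real.norm_eq_abs, abs_of_pos (p1 x)]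
    have e1 : ϑ₁ x ≤ C * ϑ₂ (a n) * ϑ₁ (x - a n) := by
      have := h1.2.2 (a n) (x - a n)
      rw [add_sub_cancel] at this
      exact this.trans (mul_le_mul_of_nonneg_right (h12 _) (p1 _).le)
    calc _ ≤ C * ϑ₂ (a n) * ϑ₁ (x - a n) *
          ((ϑ₂ (a n))⁻¹ * Real.exp (-Real.pi * ∑ i, (x - a n) i ^ 2)) := by
            refine mul_le_mul_of_nonneg_right e1 ?_
            have := p2 (a n)
            positivity
      _ = C * (ϑ₁ (x - a n) * Real.exp (-Real.pi * ∑ i, (x - a n) i ^ 2)) := by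
            have := (p2 (a n)).ne'
            field_simp
      _ ≤ C * (K₁ * Real.exp (-‖x - a n‖)) := mul_le_mul_of_nonneg_left (hw1 _) hC.le
      _ = _ := by ring
  -- second norm
  obtain ⟨K₂, hK₂, hw2⟩ := weight_gauss h2
  obtain ⟨B₂, hB₂, hb2⟩ := amalgam_bound (d := d) q r hr.le K₂ hK₂
  have bd2 : ∀ n, amalgamNorm q r ϑ₂ (fourierT (gaussT (ϑ₂ (a n))⁻¹ (a n))) ≤ B₂ := by
    intro n
    refine hb2 _ _ 0 fun x => ?_
    rw [fourier_gaussT, sub_zero, norm_smul, norm_mul, Complex.norm_exp_ofReal_mul_I, mul_one,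
      Complex.norm_real, Real.norm_eq_abs, Real.norm_eq_abs, abs_of_pos (p2 x), abs_of_nonneg
      (mul_nonneg (inv_nonneg.2 (p2 _).le) (Real.exp_pos _).le)]
    refine le_trans ?_ (hw2 x)
    refine mul_le_mul_of_nonneg_left ?_ (p2 x).le
    exact mul_le_of_le_one_left (Real.exp_pos _).le (inv_le_one_of_one_le₀ (h2.2.1 _))
  have mf : ∀ n, Measurable (fourierT (gaussT (ϑ₂ (a n))⁻¹ (a n))) := by
    intro n
    rw [fourier_gaussT]
    fun_prop
  refine ⟨fun n => gaussT (ϑ₂ (a n))⁻¹ (a n), fun n => ⟨⟨gaussT_meas _ _, (bd1 n).trans_lt hB₁⟩,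
    ⟨mf n, (bd2 n).trans_lt hB₂⟩⟩, ⟨(B₁ + B₂).toReal, fun n => ?_⟩, ?_⟩
  · rw [ENNReal.ofReal_toReal (ENNReal.add_lt_top.2 ⟨hB₁, hB₂⟩).ne]
    exact add_le_add (bd1 n) (bd2 n)
  rintro ⟨φ, g, hφ, ⟨hg, hgfin⟩, hlim⟩
  -- lower bound on balls
  obtain ⟨D, b, hD, hb, hDb⟩ := beurling_exp h3
  set c : ℝ := δ / (D * Real.exp b) * Real.exp (-Real.pi * d) with hc
  have hc0 : 0 < c := by positivity
  have low : ∀ n, ∀ x ∈ Metric.ball (a n) 1,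
      ENNReal.ofReal c ≤ ‖ϑ₃ x • gaussT (ϑ₂ (a n))⁻¹ (a n) x‖ₑ := by
    intro n x hxb
    rw [← ofReal_norm]
    apply ENNReal.ofReal_le_ofReal
    rw [norm_smul, hnorm, Real.norm_eq_abs, abs_of_pos (p3 x)]
    have hxn : ‖x - a n‖ < 1 := by rwa [← dist_eq_norm]
    have e1 : ϑ₃ (a n) / (D * Real.exp b) ≤ ϑ₃ x := by
      rw [div_le_iff₀ (by positivity)]
      have := h3.2.2 x (a n - x)
      rw [add_sub_cancel] at this
      refine this.trans (mul_le_mul_of_nonneg_left ((hDb _).trans ?_) (p3 x).le)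
      rw [norm_sub_rev]
      refine mul_le_mul_of_nonneg_left (Real.exp_le_exp.2 ?_) hD.le
      exact mul_le_of_le_one_right hb hxn.le
    have e2 : Real.exp (-Real.pi * d) ≤ Real.exp (-Real.pi * ∑ i, (x - a n) i ^ 2) := by
      apply Real.exp_le_exp.2
      have : ∑ i, (x - a n) i ^ 2 ≤ ∑ i : Fin d, (1 : ℝ) := by
        refine Finset.sum_le_sum fun i _ => ?_
        have := (norm_le_pi_norm (x - a n) i).trans hxn.le
        rw [Real.norm_eq_abs] at this
        rw [← sq_abs]
        exact pow_le_one₀ (abs_nonneg _) this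
      simp only [Finset.sum_const, Finset.card_univ, Fintype.card_fin, nsmul_eq_mul, mul_one] at this
      nlinarith [Real.pi_pos]
    have e3 := hda n
    calc c ≤ ϑ₃ (a n) / ϑ₂ (a n) / (D * Real.exp b) *
            Real.exp (-Real.pi * ∑ i, (x - a n) i ^ 2) := by
            rw [hc]
            have := p3 (a n)
            have := p2 (a n)
            gcongr
      _ = ϑ₃ (a n) / (D * Real.exp b) *
          ((ϑ₂ (a n))⁻¹ * Real.exp (-Real.pi * ∑ i, (x - a n) i ^ 2)) := by
            field_simp
      _ ≤ _ := by
            refine mul_le_mul_of_nonneg_right e1 ?_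
            have := p2 (a n)
            positivity
  set G : (Fin d → ℝ) → ℝ≥0∞ := fun x => ‖ϑ₃ x • g x‖ₑ with hG
  have hGm : Measurable G := (h3.1.smul hg).enorm
  have hGfin : ∫⁻ x, G x ≠ ⊤ := ((lintegral_le_amalgam p hp h3.1 hg).trans_lt hgfin).ne
  set V : ℝ≥0∞ := volume (Metric.ball (0 : Fin d → ℝ) 1) with hV
  have hV0 : 0 < V := Metric.measure_ball_pos _ _ one_pos
  have main : ∀ k, ENNReal.ofReal c * V ≤
      amalgamNorm p 1 ϑ₃ (fun x => gaussT (ϑ₂ (a (φ k)))⁻¹ (a (φ k)) x - g x) +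
      ∫⁻ x, (Metric.ball (a (φ k)) 1).indicator G x := by
    intro k
    set n := φ k
    have hm : Measurable fun x => gaussT (ϑ₂ (a n))⁻¹ (a n) x - g x := (gaussT_meas _ _).sub hg
    calc ENNReal.ofReal c * V = ∫⁻ x in Metric.ball (a n) 1, ENNReal.ofReal c := by
          rw [setLIntegral_const, hV, Measure.addHaar_ball_center volume (a n)]
      _ ≤ ∫⁻ x in Metric.ball (a n) 1,
            (‖ϑ₃ x • (gaussT (ϑ₂ (a n))⁻¹ (a n) x - g x)‖ₑ + G x) := by
          refine setLIntegral_mono' Metric.isOpen_ball.measurableSet fun x hxb => ?_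
          refine (low n x hxb).trans ?_
          rw [hG]
          refine le_trans (le_of_eq ?_) (enorm_add_le _ _)
          rw [← smul_add, sub_add_cancel]
      _ = (∫⁻ x in Metric.ball (a n) 1, ‖ϑ₃ x • (gaussT (ϑ₂ (a n))⁻¹ (a n) x - g x)‖ₑ) +
            ∫⁻ x in Metric.ball (a n) 1, G x := lintegral_add_right _ hGm
      _ ≤ _ := by
          rw [lintegral_indicator Metric.isOpen_ball.measurableSet]
          gcongr
          exact (setLIntegral_le_lintegral _ _).trans (lintegral_le_amalgam p hp h3.1 hm)
  have tail : Tendsto (fun k => ∫⁻ x, (Metric.ball (a (φ k)) 1).indicator G x) atTop (𝓝 0) := by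
    have := tendsto_lintegral_of_dominated_convergence (μ := volume) (f := fun _ => 0)
      (F := fun k => (Metric.ball (a (φ k)) 1).indicator G) G
      (fun k => hGm.indicator Metric.isOpen_ball.measurableSet)
      (fun k => Eventually.of_forall fun x => Set.indicator_le_self _ _ _) hGfin
      (Eventually.of_forall fun x => ?_)
    · simpa using this
    · obtain ⟨N, hN⟩ := exists_nat_ge ‖x‖
      refine tendsto_const_nhds.congr' ?_
      filter_upwards [eventually_ge_atTop N] with k hk
      rw [Set.indicator_of_notMem]
      intro hmem
      rw [Metric.mem_ball, dist_eq_norm] at hmem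
      have h4 := ha (φ k)
      have h5 : (N : ℝ) ≤ (φ k : ℝ) := by exact_mod_cast hk.trans (hφ.id_le k)
      have h6 : ‖a (φ k)‖ ≤ ‖x‖ + ‖x - a (φ k)‖ := by
        have := norm_sub_le x (x - a (φ k))
        rwa [sub_sub_cancel] at this
      linarith
  have hsum := hlim.add tail
  rw [add_zero] at hsum
  have := ge_of_tendsto' hsum main
  have hpos : 0 < ENNReal.ofReal c * V := ENNReal.mul_pos (by simpa using hc0) hV0.ne'
  exact absurd this (not_le.2 hpos)
end
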